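/- arXiv:1406.5458 — 2 statements merged into one kernel-verified Lean document; each statement's English description precedes it below -/
import Mathlib

section
/- As formal power series in q and Laurent polynomials in z, S̄B(z,q) := ∑_{n≥1} q^{2n} (-q^{2n+1};q)_∞ (q^{2n+1};q)_∞ / ((z q^{2n}; q^2)_∞ (z^{-1} q^{2n}; q^2)_∞ (q^{2n+1}; q^2)_∞^2) equals [R2(z,q) - C2(z,q)] / ((1-z)(1-z^{-1})), where R2(z,q) = ((-q;q)_∞/(q;q)_∞)(1 + 2∑_{n≥1} (1-z)(1-z^{-1})(-1)^n q^{n^2+2n} / ((1-z q^{2n})(1-z^{-1} q^{2n}))) and C2(z,q) = (-q;q)_∞ (q^2;q^2)_∞ / ((q;q^2)_∞ (z q^2;q^2)_∞ (z^{-1} q^2;q^2)_∞). -/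
/-- The infinite q-Pochhammer symbol `(a; q)_∞ = ∏_{j ≥ 0} (1 - a q^j)`. -/
noncomputable def qPochInf (a q : ℂ) : ℂ := ∏' j : ℕ, (1 - a * q ^ j)

/-- The finite q-Pochhammer symbol `(a; q)_n = ∏_{j = 0}^{n-1} (1 - a q^j)`. -/
noncomputable def qPoch (a q : ℂ) (n : ℕ) : ℂ := ∏ j ∈ Finset.range n, (1 - a * q ^ j)

/-- The two-variable spt2bar crank generating function
`S̄B(z,q) = ∑_{n≥1} q^{2n}(-q^{2n+1};q)_∞(q^{2n+1};q)_∞ /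
  ((zq^{2n};q^2)_∞ (z⁻¹q^{2n};q^2)_∞ (q^{2n+1};q^2)_∞^2)`. -/
noncomputable def SB (z q : ℂ) : ℂ :=
  ∑' n : ℕ,
    q ^ (2 * (n + 1)) * qPochInf (-q ^ (2 * (n + 1) + 1)) q *
        qPochInf (q ^ (2 * (n + 1) + 1)) q /
      (qPochInf (z * q ^ (2 * (n + 1))) (q ^ 2) *
        qPochInf (z⁻¹ * q ^ (2 * (n + 1))) (q ^ 2) *
        qPochInf (q ^ (2 * (n + 1) + 1)) (q ^ 2) ^ 2)

/-- The M2-rank generating function for overpartitions. -/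
noncomputable def R2 (z q : ℂ) : ℂ :=
  qPochInf (-q) q / qPochInf q q *
    (1 + 2 * ∑' n : ℕ,
      (1 - z) * (1 - z⁻¹) * (-1) ^ (n + 1) * q ^ ((n + 1) ^ 2 + 2 * (n + 1)) /
        ((1 - z * q ^ (2 * (n + 1))) * (1 - z⁻¹ * q ^ (2 * (n + 1)))))

/-- The residual M2-crank generating function for overpartitions. -/
noncomputable def C2 (z q : ℂ) : ℂ :=
  qPochInf (-q) q * qPochInf (q ^ 2) (q ^ 2) /
    (qPochInf q (q ^ 2) * qPochInf (z * q ^ 2) (q ^ 2) * qPochInf (z⁻¹ * q ^ 2) (q ^ 2))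


open Filter Topology

lemma qp_summable (a p : ℂ) (hp : ‖p‖ < 1) : Summable (fun j : ℕ => ‖-(a * p ^ j)‖) := by
  simp only [norm_neg, norm_mul, norm_pow]
  exact (summable_geometric_of_lt_one (norm_nonneg _) hp).mul_left _

lemma qp_multipliable (a p : ℂ) (hp : ‖p‖ < 1) : Multipliable (fun j : ℕ => 1 - a * p ^ j) := by
  simpa [sub_eq_add_neg] using multipliable_one_add_of_summable (qp_summable a p hp)

lemma qp_ne_zero (a p : ℂ) (hp : ‖p‖ < 1) (h : ∀ j : ℕ, 1 - a * p ^ j ≠ 0) :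
    qPochInf a p ≠ 0 := by
  have := tprod_one_add_ne_zero_of_summable (f := fun j : ℕ => -(a * p ^ j))
    (fun i => by simpa [sub_eq_add_neg] using h i) (qp_summable a p hp)
  simpa [qPochInf, sub_eq_add_neg] using this

lemma qp_split (a p : ℂ) (hp : ‖p‖ < 1) (n : ℕ) :
    qPoch a p n * qPochInf (a * p ^ n) p = qPochInf a p := by
  have h : Multipliable (fun j : ℕ => 1 - a * p ^ (j + n)) := by
    have := qp_multipliable (a * p ^ n) p hp
    refine this.congr (fun j => ?_)
    ring
  have := Multipliable.prod_mul_tprod_nat_mul' (f := fun j : ℕ => 1 - a * p ^ j) h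
  rw [qPochInf, qPochInf, qPoch, ← this]
  congr 1
  refine tprod_congr (fun j => ?_)
  ring

lemma qp_tendsto (a p : ℂ) (hp : ‖p‖ < 1) :
    Tendsto (fun n => qPoch a p n) atTop (𝓝 (qPochInf a p)) :=
  (qp_multipliable a p hp).tendsto_prod_tprod_nat

lemma qp_pm (a q : ℂ) (hq : ‖q‖ < 1) :
    qPochInf (-a) q * qPochInf a q = qPochInf (a ^ 2) (q ^ 2) := by
  rw [qPochInf, qPochInf, qPochInf,
    ← (qp_multipliable (-a) q hq).tprod_mul (qp_multipliable a q hq)]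
  refine tprod_congr (fun j => ?_)
  ring

lemma norm_sq_lt (q : ℂ) (hq : ‖q‖ < 1) : ‖q ^ 2‖ < 1 := by
  rw [norm_pow]; exact pow_lt_one₀ (norm_nonneg _) hq (by norm_num)

lemma qp_even_odd (q : ℂ) (hq : ‖q‖ < 1) :
    qPochInf q (q ^ 2) * qPochInf (q ^ 2) (q ^ 2) = qPochInf q q := by
  have hp := norm_sq_lt q hq
  have := tprod_even_mul_odd (f := fun j : ℕ => 1 - q * q ^ j)
    ((qp_multipliable q (q ^ 2) hp).congr (fun j => by rw [pow_mul]))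
    ((qp_multipliable (q ^ 2) (q ^ 2) hp).congr (fun j => by ring))
  rw [qPochInf, qPochInf, qPochInf, ← this]
  congr 1
  · exact tprod_congr (fun j => by rw [pow_mul])
  · exact tprod_congr (fun j => by ring)

lemma one_sub_ne (x : ℂ) (hx : ‖x‖ < 1) : 1 - x ≠ 0 := by
  intro h
  have : x = 1 := (sub_eq_zero.mp h).symm
  rw [this] at hx; simp at hx

lemma one_sub_ne_mul (a p : ℂ) (ha : ‖a‖ < 1) (hp : ‖p‖ < 1) (j : ℕ) : 1 - a * p ^ j ≠ 0 := by
  apply one_sub_ne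
  rw [norm_mul, norm_pow]
  have : ‖p‖ ^ j ≤ 1 := pow_le_one₀ (norm_nonneg _) hp.le
  nlinarith [norm_nonneg a, norm_nonneg p]

lemma one_sub_unit_ne (z p : ℂ) (hz : ‖z‖ = 1) (hz1 : z ≠ 1) (hp : ‖p‖ < 1) (j : ℕ) :
    1 - z * p ^ j ≠ 0 := by
  rcases Nat.eq_zero_or_pos j with h | h
  · subst h; simpa using sub_ne_zero.mpr hz1.symm
  · apply one_sub_ne
    rw [norm_mul, hz, one_mul, norm_pow]
    exact pow_lt_one₀ (norm_nonneg _) hp (by omega)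

lemma qPoch_ne (a p : ℂ) (h : ∀ j : ℕ, 1 - a * p ^ j ≠ 0) (n : ℕ) : qPoch a p n ≠ 0 :=
  Finset.prod_ne_zero_iff.mpr fun j _ => h j

lemma euler_id (q : ℂ) (hq : ‖q‖ < 1) : qPochInf (-q) q * qPochInf q (q ^ 2) = 1 := by
  have hp := norm_sq_lt q hq
  have h1 := qp_pm q q hq
  have h2 := qp_even_odd q hq
  have h3 := qp_ne_zero (q ^ 2) (q ^ 2) hp (one_sub_ne_mul _ _ hp hp)
  rw [← h2] at h1
  apply mul_right_cancel₀ h3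
  linear_combination h1

lemma qPoch_succ (a p : ℂ) (n : ℕ) : qPoch a p (n + 1) = qPoch a p n * (1 - a * p ^ n) := by
  simp [qPoch, Finset.prod_range_succ]

lemma qPoch_zero (a p : ℂ) : qPoch a p 0 = 1 := by simp [qPoch]

/-- `1/(p;p)_k`, extended by zero to negative `k`. -/
noncomputable def ee (p : ℂ) (k : ℤ) : ℂ := if k < 0 then 0 else (qPoch p p k.toNat)⁻¹

lemma ee_nat (p : ℂ) (n : ℕ) : ee p n = (qPoch p p n)⁻¹ := by simp [ee]

lemma ee_neg (p : ℂ) (k : ℤ) (h : k < 0) : ee p k = 0 := by simp [ee, h]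

lemma ee_rec (p : ℂ) (hp : ‖p‖ < 1) (k : ℤ) : ee p (k - 1) = (1 - p ^ k) * ee p k := by
  rcases lt_trichotomy k 0 with h | h | h
  · rw [ee_neg _ _ h, ee_neg _ _ (by omega)]; simp
  · subst h; rw [ee_neg _ _ (by omega)]; simp
  · obtain ⟨n, rfl⟩ : ∃ n : ℕ, k = (n : ℤ) + 1 := ⟨(k - 1).toNat, by omega⟩
    rw [add_sub_cancel_right, ee_nat]
    have : ((n : ℤ) + 1) = ((n + 1 : ℕ) : ℤ) := by push_cast; rfl
    rw [this, ee_nat, qPoch_succ, zpow_natCast]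
    have h1 := one_sub_ne_mul p p hp hp n
    have h2 := qPoch_ne p p (one_sub_ne_mul p p hp hp) n
    have h3 : 1 - p ^ (n + 1) = 1 - p * p ^ n := by ring
    rw [h3]
    field_simp

lemma ee_bdd (p : ℂ) (hp : ‖p‖ < 1) : ∃ B : ℝ, ∀ k, ‖ee p k‖ ≤ B := by
  have h := (qp_tendsto p p hp).inv₀ (qp_ne_zero p p hp (one_sub_ne_mul p p hp hp))
  obtain ⟨B, hB⟩ := (Metric.isBounded_range_of_tendsto _ h).exists_norm_le
  refine ⟨max B 0, fun k => ?_⟩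
  by_cases hk : k < 0
  · rw [ee_neg _ _ hk]; simp
  · rw [ee, if_neg hk]
    exact (hB _ ⟨_, rfl⟩).trans (le_max_left _ _)

lemma ee_tendsto (p : ℂ) (hp : ‖p‖ < 1) (r : ℤ) :
    Tendsto (fun N : ℕ => ee p (N + r)) atTop (𝓝 (qPochInf p p)⁻¹) := by
  have h := (qp_tendsto p p hp).inv₀ (qp_ne_zero p p hp (one_sub_ne_mul p p hp hp))
  have h2 : Tendsto (fun N : ℕ => ((N : ℤ) + r).toNat) atTop atTop := by
    rw [tendsto_atTop_atTop]
    intro b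
    exact ⟨b + r.natAbs, fun a ha => by omega⟩
  refine (h.comp h2).congr' ?_
  filter_upwards [eventually_ge_atTop r.natAbs] with N hN
  rw [ee, if_neg (by omega)]
  rfl

lemma ee_supp (p : ℂ) (n m : ℕ) (f : ℤ → ℂ) :
    Summable (fun r : ℤ => f r * (ee p (n - r) * ee p (m + r))) := by
  apply summable_of_hasFiniteSupport
  apply (Set.finite_Icc (-(m : ℤ)) n).subset
  intro r hr
  by_contra hc
  apply hr
  simp only [Set.mem_Icc, not_and_or, not_le] at hc
  rcases hc with h | h
  · simp [ee_neg p ((m : ℤ) + r) (by omega)]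
  · simp [ee_neg p ((n : ℤ) - r) (by omega)]

/-- Finite Jacobi triple product sum. -/
noncomputable def gg (q : ℂ) (n m : ℕ) : ℂ :=
  ∑' r : ℤ, ((-1) ^ r * q ^ (r ^ 2)) * (ee (q ^ 2) (n - r) * ee (q ^ 2) (m + r))

lemma gg_zero (q : ℂ) : gg q 0 0 = 1 := by
  rw [gg, tsum_eq_single 0]
  · simp [ee, qPoch]
  · intro r hr
    rcases lt_or_gt_of_ne hr with h | h
    · simp [ee_neg (q ^ 2) r h]
    · simp [ee_neg (q ^ 2) (-r) (by omega)]

lemma gg_symm (q : ℂ) (n m : ℕ) : gg q n m = gg q m n := by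
  rw [gg, gg, ← (Equiv.neg ℤ).tsum_eq]
  refine tsum_congr (fun r => ?_)
  simp only [Equiv.neg_apply, neg_sq, sub_neg_eq_add, zpow_neg, ← sub_eq_add_neg]
  rw [show ((-1 : ℂ) ^ r)⁻¹ = (-1) ^ r by rw [← inv_zpow]; norm_num]
  ring

lemma gg_step (q : ℂ) (hq : ‖q‖ < 1) (h0 : q ≠ 0) (n m : ℕ) :
    (1 - (q ^ 2) ^ (n + m + 1)) * gg q (n + 1) m = (1 - q ^ (2 * n + 1)) * gg q n m := by
  have hp := norm_sq_lt q hq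
  set f : ℤ → ℂ := fun r => ((-1) ^ r * q ^ (r ^ 2)) *
    (ee (q ^ 2) (n - r) * ee (q ^ 2) (m + r)) with hf
  have hs : Summable f := ee_supp _ _ _ _
  have hsh : Summable (fun r : ℤ => f (r - 1)) := (Equiv.subRight (1 : ℤ)).summable_iff.mpr hs
  have e1 : ∑' r : ℤ, f (r - 1) = ∑' r, f r := (Equiv.subRight (1 : ℤ)).tsum_eq f
  have : ∀ r : ℤ, (1 - (q ^ 2) ^ (n + m + 1)) * (((-1) ^ r * q ^ (r ^ 2)) *
      (ee (q ^ 2) ((n + 1 : ℕ) - r) * ee (q ^ 2) (m + r))) = f r - q ^ (2 * n + 1) * f (r - 1) := by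
    intro r
    simp only [hf]
    have a1 := ee_rec (q ^ 2) hp ((n + 1 : ℕ) - r)
    have a2 := ee_rec (q ^ 2) hp (m + r)
    rw [show ((n + 1 : ℕ) : ℤ) - r - 1 = n - r by push_cast; ring] at a1
    rw [show (n : ℤ) - (r - 1) = (n + 1 : ℕ) - r by push_cast; ring,
      show (m : ℤ) + (r - 1) = m + r - 1 by ring, a1, a2]
    have b1 : (q ^ 2) ^ (n + m + 1) =
      (q ^ 2) ^ (((n + 1 : ℕ) : ℤ) - r) * (q ^ 2) ^ ((m : ℤ) + r) := by
      rw [← zpow_add₀ (pow_ne_zero 2 h0), ← zpow_natCast]; congr 1; push_cast; ring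
    have b2 : q ^ (2 * n + 1) * q ^ ((r - 1) ^ 2) =
        q ^ (r ^ 2) * (q ^ 2) ^ (((n + 1 : ℕ) : ℤ) - r) := by
      rw [← zpow_natCast q 2, ← zpow_mul, ← zpow_natCast, ← zpow_add₀ h0, ← zpow_add₀ h0]
      congr 1; push_cast; ring
    have b3 : (-1 : ℂ) ^ (r - 1) = - (-1) ^ r := by
      rw [zpow_sub₀ (by norm_num), zpow_one, div_neg, div_one]
    rw [b1, b3]
    linear_combination (-(-1 : ℂ) ^ r * ee (q ^ 2) ((n + 1 : ℕ) - r) *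
      ((1 - (q ^ 2) ^ ((m : ℤ) + r)) * ee (q ^ 2) (m + r))) * b2
  rw [gg, ← tsum_mul_left, tsum_congr this, hs.tsum_sub (hsh.mul_left _), tsum_mul_left, e1, gg]
  ring

lemma qPoch_q_step (q : ℂ) (n : ℕ) :
    qPoch q (q ^ 2) (n + 1) = qPoch q (q ^ 2) n * (1 - q ^ (2 * n + 1)) := by
  rw [qPoch_succ]; ring

lemma gg_eq (q : ℂ) (hq : ‖q‖ < 1) (h0 : q ≠ 0) (n m : ℕ) :
    qPoch (q ^ 2) (q ^ 2) (n + m) * gg q n m = qPoch q (q ^ 2) n * qPoch q (q ^ 2) m := by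
  have step : ∀ n m, qPoch (q ^ 2) (q ^ 2) (n + m) * gg q n m =
      qPoch q (q ^ 2) n * qPoch q (q ^ 2) m →
      qPoch (q ^ 2) (q ^ 2) (n + 1 + m) * gg q (n + 1) m =
      qPoch q (q ^ 2) (n + 1) * qPoch q (q ^ 2) m := by
    intro n m h
    have := gg_step q hq h0 n m
    rw [show n + 1 + m = n + m + 1 by ring, qPoch_succ, qPoch_q_step]
    linear_combination qPoch (q ^ 2) (q ^ 2) (n + m) * this + (1 - q ^ (2 * n + 1)) * h
  induction n with
  | zero =>
    induction m with
    | zero => simp [gg_zero, qPoch_zero]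
    | succ m ih =>
      have := step m 0 (by rw [gg_symm, add_comm m 0, ih, mul_comm])
      rw [gg_symm, add_comm 0, mul_comm (qPoch q (q ^ 2) 0)]
      exact this
  | succ n ih => exact step n m ih

lemma qPoch_shift (a p : ℂ) (n : ℕ) : qPoch a p (n + 1) = (1 - a) * qPoch (a * p) p n := by
  simp only [qPoch, Finset.prod_range_succ']
  rw [mul_comm]
  congr 1
  · simp
  · exact Finset.prod_congr rfl fun j _ => by ring

lemma one_sub_unit_zpow_ne (z p : ℂ) (hz : ‖z‖ = 1) (hz1 : z ≠ 1) (hp : ‖p‖ < 1) (hp0 : p ≠ 0)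
    (r : ℤ) : 1 - z * p ^ r ≠ 0 := by
  intro h
  have h1 : z * p ^ r = 1 := (sub_eq_zero.mp h).symm
  have h2 : ‖p‖ ^ r = 1 := by
    have := congrArg norm h1
    simpa [hz] using this
  have h3 : r = 0 := (zpow_eq_one_iff_right₀ (norm_nonneg p) hp.ne).mp h2
  subst h3
  simp at h1
  exact hz1 h1

noncomputable def cc (z p : ℂ) (r : ℤ) : ℂ :=
  (1 - z) * (1 - z⁻¹) * p ^ r / ((1 - z * p ^ r) * (1 - z⁻¹ * p ^ r))

noncomputable def uu (z q : ℂ) (r : ℤ) : ℂ := (-1) ^ r * q ^ (r ^ 2) * cc z (q ^ 2) r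

noncomputable def FF (z q : ℂ) (N : ℕ) : ℂ :=
  ∑' r : ℤ, uu z q r * (ee (q ^ 2) (N - r) * ee (q ^ 2) (N + r))

lemma cc_zero (z p : ℂ) (hz : ‖z‖ = 1) (hz1 : z ≠ 1) : cc z p 0 = 1 := by
  have h1 : (1 - z) ≠ 0 := sub_ne_zero.mpr hz1.symm
  have h2 : (1 - z⁻¹) ≠ 0 := sub_ne_zero.mpr (by simpa [eq_comm] using hz1)
  simp only [cc, zpow_zero, mul_one]
  exact div_self (mul_ne_zero h1 h2)

lemma cc_neg (z p : ℂ) (hz : ‖z‖ = 1) (hz1 : z ≠ 1) (hp : ‖p‖ < 1) (hp0 : p ≠ 0) (r : ℤ) :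
    cc z p (-r) = cc z p r := by
  have hz0 : z ≠ 0 := by rintro rfl; simp at hz
  have hzi : ‖z⁻¹‖ = 1 := by simp [hz]
  have hzi1 : z⁻¹ ≠ 1 := by simpa using hz1
  have a1 := one_sub_unit_zpow_ne z p hz hz1 hp hp0 r
  have a2 := one_sub_unit_zpow_ne z⁻¹ p hzi hzi1 hp hp0 r
  have a3 := one_sub_unit_zpow_ne z p hz hz1 hp hp0 (-r)
  have a4 := one_sub_unit_zpow_ne z⁻¹ p hzi hzi1 hp hp0 (-r)
  rw [cc, cc, div_eq_div_iff (mul_ne_zero a3 a4) (mul_ne_zero a1 a2), zpow_neg]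
  have hx : p ^ r ≠ 0 := zpow_ne_zero _ hp0
  field_simp
  ring

lemma uu_neg (z q : ℂ) (hz : ‖z‖ = 1) (hz1 : z ≠ 1) (hq : ‖q‖ < 1) (h0 : q ≠ 0) (r : ℤ) :
    uu z q (-r) = uu z q r := by
  rw [uu, uu, cc_neg z _ hz hz1 (norm_sq_lt q hq) (pow_ne_zero 2 h0), neg_sq, zpow_neg,
    show ((-1 : ℂ) ^ r)⁻¹ = (-1) ^ r by rw [← inv_zpow]; norm_num]

lemma FF_zero (z q : ℂ) (hz : ‖z‖ = 1) (hz1 : z ≠ 1) : FF z q 0 = 1 := by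
  rw [FF, tsum_eq_single 0]
  · simp [ee, qPoch, uu, cc_zero z _ hz hz1]
  · intro r hr
    rcases lt_or_gt_of_ne hr with h | h
    · simp [ee_neg (q ^ 2) r h]
    · simp [ee_neg (q ^ 2) (-r) (by omega)]

lemma FF_step (z q : ℂ) (hz : ‖z‖ = 1) (hz1 : z ≠ 1) (hq : ‖q‖ < 1) (h0 : q ≠ 0) (N : ℕ) :
    (1 - z * (q ^ 2) ^ (N + 1)) * (1 - z⁻¹ * (q ^ 2) ^ (N + 1)) * FF z q (N + 1) =
      FF z q N + (1 - z) * (1 - z⁻¹) * (q ^ 2) ^ (N + 1) * gg q (N + 1) (N + 1) := by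
  have hp := norm_sq_lt q hq
  have hp0 := pow_ne_zero 2 h0
  have hz0 : z ≠ 0 := by rintro rfl; simp at hz
  have hzi : ‖z⁻¹‖ = 1 := by simp [hz]
  have hzi1 : z⁻¹ ≠ 1 := by simpa using hz1
  rw [FF, FF, gg, ← tsum_mul_left, ← tsum_mul_left,
    ← Summable.tsum_add (ee_supp _ _ _ _) ((ee_supp _ _ _ _).mul_left _)]
  refine tsum_congr (fun r => ?_)
  have a1 := one_sub_unit_zpow_ne z _ hz hz1 hp hp0 r
  have a2 := one_sub_unit_zpow_ne z⁻¹ _ hzi hzi1 hp hp0 r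
  have e1 := ee_rec (q ^ 2) hp ((N + 1 : ℕ) - r)
  have e2 := ee_rec (q ^ 2) hp ((N + 1 : ℕ) + r)
  rw [show ((N + 1 : ℕ) : ℤ) - r - 1 = N - r by push_cast; ring] at e1
  rw [show ((N + 1 : ℕ) : ℤ) + r - 1 = N + r by push_cast; ring] at e2
  rw [e1, e2, zpow_sub₀ hp0, zpow_add₀ hp0, zpow_natCast, uu, cc]
  generalize ee (q ^ 2) ((N + 1 : ℕ) - r) = E1
  generalize ee (q ^ 2) ((N + 1 : ℕ) + r) = E2
  have hx : (q ^ 2) ^ r ≠ 0 := zpow_ne_zero _ hp0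
  generalize (q ^ 2) ^ r = x at *
  generalize (q ^ 2) ^ (N + 1) = y
  generalize (-1 : ℂ) ^ r = s
  generalize q ^ (r ^ 2) = t
  have key : (1 - z * y) * (1 - z⁻¹ * y) - (1 - y / x) * (1 - y * x) =
      y / x * ((1 - z * x) * (1 - z⁻¹ * x)) := by
    field_simp
    ring
  have key2 : (1 - z) * (1 - z⁻¹) * x / ((1 - z * x) * (1 - z⁻¹ * x)) *
      (y / x * ((1 - z * x) * (1 - z⁻¹ * x))) = (1 - z) * (1 - z⁻¹) * y := by
    generalize 1 - z * x = A at *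
    generalize 1 - z⁻¹ * x = B at *
    field_simp
  rw [← key] at key2
  linear_combination (s * t * E1 * E2) * key2

noncomputable def tt (z q : ℂ) (n : ℕ) : ℂ :=
  qPoch z (q ^ 2) n * qPoch z⁻¹ (q ^ 2) n * qPoch q (q ^ 2) n ^ 2 /
    qPoch (q ^ 2) (q ^ 2) (2 * n) * (q ^ 2) ^ n

lemma sum_tt (z q : ℂ) (hz : ‖z‖ = 1) (hz1 : z ≠ 1) (hq : ‖q‖ < 1) (h0 : q ≠ 0) (N : ℕ) :
    ∑ n ∈ Finset.range (N + 1), tt z q n =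
      qPoch (z * q ^ 2) (q ^ 2) N * qPoch (z⁻¹ * q ^ 2) (q ^ 2) N * FF z q N := by
  have hp := norm_sq_lt q hq
  induction N with
  | zero => simp [tt, qPoch_zero, FF_zero z q hz hz1]
  | succ N ih =>
    rw [Finset.sum_range_succ, ih, qPoch_succ, qPoch_succ]
    have h1 := FF_step z q hz hz1 hq h0 N
    have h2 := gg_eq q hq h0 (N + 1) (N + 1)
    have h3 := qPoch_ne _ _ (one_sub_ne_mul _ _ hp hp) (2 * (N + 1))
    have h4 : tt z q (N + 1) = qPoch z (q ^ 2) (N + 1) * qPoch z⁻¹ (q ^ 2) (N + 1) *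
        gg q (N + 1) (N + 1) * (q ^ 2) ^ (N + 1) := by
      rw [tt, sq (qPoch q (q ^ 2) (N + 1)), ← h2, ← two_mul]
      field_simp
    rw [h4, qPoch_shift, qPoch_shift]
    linear_combination -(qPoch (z * q ^ 2) (q ^ 2) N * qPoch (z⁻¹ * q ^ 2) (q ^ 2) N) * h1

lemma qPoch_bdd (a p : ℂ) (hp : ‖p‖ < 1) : ∃ B : ℝ, 0 ≤ B ∧ ∀ n, ‖qPoch a p n‖ ≤ B := by
  obtain ⟨B, hB⟩ := (Metric.isBounded_range_of_tendsto _ (qp_tendsto a p hp)).exists_norm_le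
  exact ⟨B, (norm_nonneg _).trans (hB _ ⟨0, rfl⟩), fun n => hB _ ⟨n, rfl⟩⟩

lemma tt_summable (z q : ℂ) (hq : ‖q‖ < 1) : Summable (tt z q) := by
  have hp := norm_sq_lt q hq
  obtain ⟨B1, h1, b1⟩ := qPoch_bdd z _ hp
  obtain ⟨B2, h2, b2⟩ := qPoch_bdd z⁻¹ _ hp
  obtain ⟨B3, h3, b3⟩ := qPoch_bdd q _ hp
  obtain ⟨B4, b4⟩ := ee_bdd _ hp
  have hs : Summable (fun n : ℕ => B1 * B2 * B3 ^ 2 * B4 * ‖q ^ 2‖ ^ n) :=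
    (summable_geometric_of_lt_one (norm_nonneg _) hp).mul_left _
  refine Summable.of_norm_bounded hs (fun n => ?_)
  have b4' := b4 ((2 * n : ℕ))
  rw [ee_nat] at b4'
  rw [tt, div_eq_mul_inv]
  simp only [norm_mul, norm_pow _ n, norm_pow _ 2] at *
  gcongr
  · exact b1 n
  · exact b2 n
  · exact b3 n

lemma cc_bound (z p : ℂ) (hz : ‖z‖ = 1) (hz1 : z ≠ 1) (hp : ‖p‖ < 1) (n : ℕ) :
    ‖cc z p n‖ ≤ 1 + 4 / (1 - ‖p‖) ^ 2 := by
  have hzi : ‖z⁻¹‖ = 1 := by simp [hz]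
  have hpos : 0 < 1 - ‖p‖ := by linarith
  rcases Nat.eq_zero_or_pos n with h | h
  · subst h
    rw [Nat.cast_zero, cc_zero z _ hz hz1, norm_one]
    have : 0 ≤ 4 / (1 - ‖p‖) ^ 2 := by positivity
    linarith
  · have hpn : ‖p ^ n‖ ≤ ‖p‖ := by
      rw [norm_pow]; exact pow_le_of_le_one (norm_nonneg _) hp.le (by omega)
    have k : ∀ w : ℂ, ‖w‖ = 1 → 1 - ‖p‖ ≤ ‖1 - w * p ^ n‖ := by
      intro w hw
      have := norm_sub_norm_le 1 (w * p ^ n)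
      rw [norm_mul, hw, one_mul, norm_one] at this
      linarith
    have k2 : ∀ w : ℂ, ‖w‖ = 1 → ‖1 - w‖ ≤ 2 := by
      intro w hw
      have := norm_sub_le 1 w
      rw [norm_one, hw] at this
      linarith
    rw [cc, zpow_natCast, norm_div, norm_mul, norm_mul, norm_mul]
    have : ‖1 - z‖ * ‖1 - z⁻¹‖ * ‖p ^ n‖ /
        (‖1 - z * p ^ n‖ * ‖1 - z⁻¹ * p ^ n‖) ≤
        2 * 2 * 1 / ((1 - ‖p‖) * (1 - ‖p‖)) := by
      gcongr
      · exact k2 z hz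
      · exact k2 _ hzi
      · linarith
      · exact k z hz
      · exact k _ hzi
    have e : 2 * 2 * 1 / ((1 - ‖p‖) * (1 - ‖p‖)) = 4 / (1 - ‖p‖) ^ 2 := by
      rw [pow_two]; norm_num
    rw [e] at this
    linarith

lemma uu_le (z q : ℂ) (C : ℝ) (hc : ∀ n : ℕ, ‖cc z (q ^ 2) n‖ ≤ C) (hq : ‖q‖ < 1) (n : ℕ) :
    ‖uu z q n‖ ≤ C * ‖q‖ ^ n := by
  have h1 : ‖q‖ ^ (n ^ 2) ≤ ‖q‖ ^ n :=
    pow_le_pow_of_le_one (norm_nonneg _) hq.le (Nat.le_self_pow two_ne_zero n)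
  have h2 : ‖uu z q n‖ = ‖cc z (q ^ 2) n‖ * ‖q‖ ^ (n ^ 2) := by
    have h3 : q ^ ((n : ℤ) ^ 2) = q ^ (n ^ 2) := by
      rw [← Nat.cast_pow, zpow_natCast]
    have h4 : ‖(-1 : ℂ) ^ (n : ℤ)‖ = 1 := by simp
    rw [uu, norm_mul, norm_mul, h3, h4, norm_pow, one_mul, mul_comm]
  rw [h2]
  exact mul_le_mul (hc n) h1 (by positivity) ((norm_nonneg _).trans (hc n))

lemma uu_nat_summable (z q : ℂ) (hz : ‖z‖ = 1) (hz1 : z ≠ 1) (hq : ‖q‖ < 1) :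
    Summable (fun n : ℕ => ‖uu z q n‖) := by
  have hc := cc_bound z _ hz hz1 (norm_sq_lt q hq)
  have hs : Summable (fun n : ℕ => (1 + 4 / (1 - ‖q ^ 2‖) ^ 2) * ‖q‖ ^ n) :=
    (summable_geometric_of_lt_one (norm_nonneg _) hq).mul_left _
  exact Summable.of_nonneg_of_le (fun _ => norm_nonneg _) (uu_le z q _ hc hq) hs

lemma uu_bound (z q : ℂ) (hz : ‖z‖ = 1) (hz1 : z ≠ 1) (hq : ‖q‖ < 1) (h0 : q ≠ 0) :
    Summable (fun r : ℤ => ‖uu z q r‖) := by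
  have hnat := uu_nat_summable z q hz hz1 hq
  have : (fun n : ℕ => ‖uu z q (-(n : ℤ))‖) = fun n : ℕ => ‖uu z q n‖ :=
    funext fun n => by rw [uu_neg z q hz hz1 hq h0]
  refine Summable.of_nat_of_neg (f := fun r : ℤ => ‖uu z q r‖) hnat ?_
  rw [this]
  exact hnat

lemma FF_tendsto (z q : ℂ) (hz : ‖z‖ = 1) (hz1 : z ≠ 1) (hq : ‖q‖ < 1) (h0 : q ≠ 0) :
    Tendsto (FF z q) atTop
      (𝓝 ((∑' r, uu z q r) * ((qPochInf (q ^ 2) (q ^ 2))⁻¹ * (qPochInf (q ^ 2) (q ^ 2))⁻¹))) := by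
  have hp := norm_sq_lt q hq
  obtain ⟨B, hB⟩ := ee_bdd _ hp
  have hB0 : 0 ≤ B := (norm_nonneg _).trans (hB 0)
  rw [← tsum_mul_right]
  apply tendsto_tsum_of_dominated_convergence (bound := fun r => ‖uu z q r‖ * (B * B))
  · exact (uu_bound z q hz hz1 hq h0).mul_right _
  · intro r
    have h1 := ee_tendsto _ hp (-r)
    have h2 := ee_tendsto _ hp r
    simp only [← sub_eq_add_neg] at h1
    exact (h1.mul h2).const_mul _
  · refine Eventually.of_forall fun N r => ?_
    rw [norm_mul, norm_mul]
    gcongr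
    · exact hB _
    · exact hB _

lemma uu_tsum (z q : ℂ) (hz : ‖z‖ = 1) (hz1 : z ≠ 1) (hq : ‖q‖ < 1) (h0 : q ≠ 0) :
    ∑' r, uu z q r = 1 + 2 * ∑' n : ℕ,
      (1 - z) * (1 - z⁻¹) * (-1) ^ (n + 1) * q ^ ((n + 1) ^ 2 + 2 * (n + 1)) /
        ((1 - z * q ^ (2 * (n + 1))) * (1 - z⁻¹ * q ^ (2 * (n + 1)))) := by
  have hs : Summable (uu z q) := (uu_bound z q hz hz1 hq h0).of_norm
  have hn : Summable (fun n : ℕ => uu z q n) := hs.comp_injective Nat.cast_injective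
  have hn1 : Summable (fun n : ℕ => uu z q ((n : ℤ) + 1)) := by
    have := (summable_nat_add_iff 1).mpr hn
    simpa using this
  have hneg : ∀ n : ℕ, uu z q (-((n : ℤ) + 1)) = uu z q ((n : ℤ) + 1) :=
    fun n => uu_neg z q hz hz1 hq h0 _
  have h := tsum_of_nat_of_neg_add_one hn (by simpa only [hneg] using hn1)
  rw [h, hn.tsum_eq_zero_add]
  simp only [hneg]
  have hu0 : uu z q ((0 : ℕ) : ℤ) = 1 := by simp [uu, cc_zero z _ hz hz1]
  have hu : ∀ n : ℕ, uu z q ((n : ℤ) + 1) =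
      (1 - z) * (1 - z⁻¹) * (-1) ^ (n + 1) * q ^ ((n + 1) ^ 2 + 2 * (n + 1)) /
        ((1 - z * q ^ (2 * (n + 1))) * (1 - z⁻¹ * q ^ (2 * (n + 1)))) := by
    intro n
    rw [uu, cc, show ((n : ℤ) + 1) = ((n + 1 : ℕ) : ℤ) by push_cast; rfl, ← Nat.cast_pow,
      zpow_natCast, zpow_natCast, zpow_natCast, ← pow_mul, pow_add]
    ring
  rw [hu0]
  simp only [Nat.cast_add, Nat.cast_one, hu]
  ring

lemma SB_term (z q : ℂ) (hz : ‖z‖ = 1) (hz1 : z ≠ 1) (hq : ‖q‖ < 1) (n : ℕ) :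
    q ^ (2 * n) * qPochInf (-q ^ (2 * n + 1)) q * qPochInf (q ^ (2 * n + 1)) q /
      (qPochInf (z * q ^ (2 * n)) (q ^ 2) *
        qPochInf (z⁻¹ * q ^ (2 * n)) (q ^ 2) *
        qPochInf (q ^ (2 * n + 1)) (q ^ 2) ^ 2) =
    qPochInf (q ^ 2) (q ^ 2) / (qPochInf z (q ^ 2) * qPochInf z⁻¹ (q ^ 2) *
      qPochInf q (q ^ 2) ^ 2) * tt z q n := by
  have hp := norm_sq_lt q hq
  have hzi : ‖z⁻¹‖ = 1 := by simp [hz]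
  have hzi1 : z⁻¹ ≠ 1 := by simpa using hz1
  have s1 := qp_split z (q ^ 2) hp n
  have s2 := qp_split z⁻¹ (q ^ 2) hp n
  have s3 := qp_split q (q ^ 2) hp n
  have s4 := qp_split (q ^ 2) (q ^ 2) hp (2 * n)
  have n1 := qp_ne_zero z (q ^ 2) hp (one_sub_unit_ne z _ hz hz1 hp)
  have n2 := qp_ne_zero z⁻¹ (q ^ 2) hp (one_sub_unit_ne _ _ hzi hzi1 hp)
  have n3 := qp_ne_zero q (q ^ 2) hp (one_sub_ne_mul _ _ hq hp)
  have n4 := qp_ne_zero (q ^ 2) (q ^ 2) hp (one_sub_ne_mul _ _ hp hp)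
  rw [mul_assoc (q ^ (2 * n)), qp_pm _ _ hq,
    show (q ^ (2 * n + 1)) ^ 2 = q ^ 2 * (q ^ 2) ^ (2 * n) by ring,
    show q ^ (2 * n + 1) = q * (q ^ 2) ^ n by ring, pow_mul q 2 n, tt]
  rw [← s1, ← s2, ← s3, ← s4]
  rw [← s1] at n1
  rw [← s2] at n2
  rw [← s3] at n3
  rw [← s4] at n4
  have m1 := mul_ne_zero_iff.mp n1
  have m2 := mul_ne_zero_iff.mp n2
  have m3 := mul_ne_zero_iff.mp n3
  have m4 := mul_ne_zero_iff.mp n4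
  obtain ⟨m1, m1'⟩ := m1
  obtain ⟨m2, m2'⟩ := m2
  obtain ⟨m3, m3'⟩ := m3
  obtain ⟨m4, m4'⟩ := m4
  clear n1 n2 n3 n4 s1 s2 s3 s4
  generalize qPoch z (q ^ 2) n = A1 at *
  generalize qPoch z⁻¹ (q ^ 2) n = A2 at *
  generalize qPoch q (q ^ 2) n = A3 at *
  generalize qPoch (q ^ 2) (q ^ 2) (2 * n) = A4 at *
  generalize qPochInf (z * (q ^ 2) ^ n) (q ^ 2) = B1 at *
  generalize qPochInf (z⁻¹ * (q ^ 2) ^ n) (q ^ 2) = B2 at *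
  generalize qPochInf (q * (q ^ 2) ^ n) (q ^ 2) = B3 at *
  generalize qPochInf (q ^ 2 * (q ^ 2) ^ (2 * n)) (q ^ 2) = B4 at *
  field_simp

/-- `S̄B(z,q) = (R2(z,q) - C2(z,q)) / ((1-z)(1-z⁻¹))` for `z` a root of unity, `z ≠ 1`. -/
theorem SB_eq_rank_minus_crank (q z : ℂ) (hq : ‖q‖ < 1)
    (hz : ∃ k : ℕ, 0 < k ∧ z ^ k = 1) (hz1 : z ≠ 1) :
    SB z q = (R2 z q - C2 z q) / ((1 - z) * (1 - z⁻¹)) := by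
  obtain ⟨k, hk, hzk⟩ := hz
  have hz : ‖z‖ = 1 := Complex.norm_eq_one_of_pow_eq_one hzk hk.ne'
  have hzi : ‖z⁻¹‖ = 1 := by simp [hz]
  have hzi1 : z⁻¹ ≠ 1 := by simpa using hz1
  by_cases h0 : q = 0
  · subst h0
    simp [SB, R2, C2, qPochInf]
  have hp := norm_sq_lt q hq
  have hts := tt_summable z q hq
  have n1 := qp_ne_zero z (q ^ 2) hp (one_sub_unit_ne z _ hz hz1 hp)
  have n2 := qp_ne_zero z⁻¹ (q ^ 2) hp (one_sub_unit_ne _ _ hzi hzi1 hp)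
  have n3 := qp_ne_zero q (q ^ 2) hp (one_sub_ne_mul _ _ hq hp)
  have n4 := qp_ne_zero (q ^ 2) (q ^ 2) hp (one_sub_ne_mul _ _ hp hp)
  have hSB : SB z q = qPochInf (q ^ 2) (q ^ 2) / (qPochInf z (q ^ 2) * qPochInf z⁻¹ (q ^ 2) *
      qPochInf q (q ^ 2) ^ 2) * ((∑' n, tt z q n) - 1) := by
    have ht0 : tt z q 0 = 1 := by simp [tt, qPoch_zero]
    rw [SB, hts.tsum_eq_zero_add, ht0, add_sub_cancel_left, ← tsum_mul_left]
    exact tsum_congr fun n => SB_term z q hz hz1 hq (n + 1)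
  have hlim : ∑' n, tt z q n = qPochInf (z * q ^ 2) (q ^ 2) * qPochInf (z⁻¹ * q ^ 2) (q ^ 2) *
      ((∑' r, uu z q r) * ((qPochInf (q ^ 2) (q ^ 2))⁻¹ * (qPochInf (q ^ 2) (q ^ 2))⁻¹)) := by
    have l1 := (tendsto_add_atTop_iff_nat 1).mpr hts.hasSum.tendsto_sum_nat
    have l2 := ((qp_tendsto (z * q ^ 2) _ hp).mul (qp_tendsto (z⁻¹ * q ^ 2) _ hp)).mul
      (FF_tendsto z q hz hz1 hq h0)
    refine tendsto_nhds_unique l1 (l2.congr fun N => ?_)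
    exact (sum_tt z q hz hz1 hq h0 N).symm
  have hR : R2 z q = qPochInf (-q) q / qPochInf q q * ∑' r, uu z q r := by
    rw [uu_tsum z q hz hz1 hq h0, R2]
  have f1 := qp_split z (q ^ 2) hp 1
  have f2 := qp_split z⁻¹ (q ^ 2) hp 1
  rw [pow_one, qPoch_succ, qPoch_zero, one_mul, pow_zero, mul_one] at f1 f2
  have he : qPochInf (-q) q = (qPochInf q (q ^ 2))⁻¹ := eq_inv_of_mul_eq_one_left (euler_id q hq)
  rw [hSB, hlim, hR, C2, ← qp_even_odd q hq, he, ← f1, ← f2]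
  rw [← f1] at n1
  rw [← f2] at n2
  obtain ⟨m1, m1'⟩ := mul_ne_zero_iff.mp n1
  obtain ⟨m2, m2'⟩ := mul_ne_zero_iff.mp n2
  clear f1 f2 he hR hlim hSB n1 n2
  generalize 1 - z = A1 at *
  generalize 1 - z⁻¹ = A2 at *
  generalize qPochInf (z * q ^ 2) (q ^ 2) = B1 at *
  generalize qPochInf (z⁻¹ * q ^ 2) (q ^ 2) = B2 at *
  generalize qPochInf (q ^ 2) (q ^ 2) = B4 at *
  generalize qPochInf q (q ^ 2) = B3 at *
  field_simp
end

section
/- Let ζ3 be a primitive cube root of unity. The series S̄B(ζ3, q) := ∑_{n≥1} q^{2n}(-q^{2n+1};q)_∞(q^{2n+1};q)_∞ / ((ζ3 q^{2n};q^2)_∞ (ζ3^{-1} q^{2n};q^2)_∞ (q^{2n+1};q^2)_∞^2) has vanishing coefficient of q^N whenever N ≡ 0 or 1 (mod 3). -/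
open Filter Topology

namespace SBaux

lemma qPoch_succ (a Q : ℂ) (n : ℕ) : qPoch a Q (n + 1) = qPoch a Q n * (1 - a * Q ^ n) := by
  simp [qPoch, Finset.prod_range_succ]

lemma qPoch_zero (a Q : ℂ) : qPoch a Q 0 = 1 := by simp [qPoch]

lemma summable_aux (a : ℂ) {Q : ℂ} (hQ : ‖Q‖ < 1) : Summable fun j : ℕ => ‖-(a * Q ^ j)‖ := by
  simp only [norm_neg, norm_mul, norm_pow]
  exact (summable_geometric_of_lt_one (norm_nonneg _) hQ).mul_left _

lemma multipliable_aux (a : ℂ) {Q : ℂ} (hQ : ‖Q‖ < 1) :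
    Multipliable fun j : ℕ => (1 - a * Q ^ j) := by
  simpa [sub_eq_add_neg] using multipliable_one_add_of_summable (summable_aux a hQ)

lemma tendsto_qPoch (a : ℂ) {Q : ℂ} (hQ : ‖Q‖ < 1) :
    Tendsto (fun n => qPoch a Q n) atTop (𝓝 (qPochInf a Q)) :=
  (multipliable_aux a hQ).tendsto_prod_tprod_nat

lemma qPochInf_ne_zero {a Q : ℂ} (hQ : ‖Q‖ < 1) (h : ∀ j : ℕ, 1 - a * Q ^ j ≠ 0) :
    qPochInf a Q ≠ 0 := by
  have := tprod_one_add_ne_zero_of_summable (f := fun j : ℕ => -(a * Q ^ j))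
    (by simpa [sub_eq_add_neg] using h) (summable_aux a hQ)
  simpa [qPochInf, sub_eq_add_neg] using this

lemma qPoch_ne_zero {a Q : ℂ} (h : ∀ j : ℕ, 1 - a * Q ^ j ≠ 0) (n : ℕ) :
    qPoch a Q n ≠ 0 := Finset.prod_ne_zero_iff.mpr fun j _ => h j

lemma qPochInf_split (a : ℂ) {Q : ℂ} (hQ : ‖Q‖ < 1) (n : ℕ) :
    qPochInf a Q = qPoch a Q n * qPochInf (a * Q ^ n) Q := by
  have h := Multipliable.prod_mul_tprod_nat_mul' (f := fun j : ℕ => 1 - a * Q ^ j) (k := n) (by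
    have := multipliable_aux (a * Q ^ n) hQ
    refine this.congr fun j => ?_
    ring)
  rw [qPochInf, ← h, qPoch, qPochInf]
  congr 1
  refine tprod_congr fun j => ?_
  ring

lemma one_sub_ne_zero_of_norm {x : ℂ} (h : ‖x‖ < 1) : 1 - x ≠ 0 := by
  intro h0
  rw [sub_eq_zero] at h0
  rw [← h0] at h
  simp at h

lemma factor_ne_zero {a Q : ℂ} (ha : ‖a‖ < 1) (hQ : ‖Q‖ < 1) (j : ℕ) : 1 - a * Q ^ j ≠ 0 := by
  apply one_sub_ne_zero_of_norm
  rw [norm_mul, norm_pow]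
  calc ‖a‖ * ‖Q‖ ^ j ≤ ‖a‖ * 1 := by
        gcongr
        exact pow_le_one₀ (norm_nonneg _) hQ.le
    _ < 1 := by simpa using ha

lemma bounded_of_tendsto {f : ℕ → ℂ} {a : ℂ} (h : Tendsto f atTop (𝓝 a)) :
    ∃ K : ℝ, 0 < K ∧ ∀ n, ‖f n‖ ≤ K := by
  obtain ⟨K, hK⟩ := (Metric.isBounded_range_of_tendsto f h).exists_norm_le
  refine ⟨max K 1, by positivity, fun n => (hK _ ⟨n, rfl⟩).trans (le_max_left _ _)⟩

/-- `1/(Q;Q)_m` extended by zero to negative `m`. -/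
noncomputable def rr (Q : ℂ) (m : ℤ) : ℂ := if 0 ≤ m then (qPoch Q Q m.toNat)⁻¹ else 0

lemma rr_neg (Q : ℂ) {m : ℤ} (h : m < 0) : rr Q m = 0 := by simp [rr, h]

lemma rr_nat (Q : ℂ) (m : ℕ) : rr Q m = (qPoch Q Q m)⁻¹ := by simp [rr]

lemma rr_step {Q : ℂ} (hQ : ‖Q‖ < 1) (m : ℤ) : rr Q (m - 1) = (1 - Q ^ m) * rr Q m := by
  rcases lt_trichotomy m 0 with h | h | h
  · rw [rr_neg _ h, rr_neg _ (by omega), mul_zero]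
  · subst h
    rw [rr_neg _ (by omega)]; simp
  · obtain ⟨k, rfl⟩ : ∃ k : ℕ, m = (k : ℤ) + 1 := ⟨(m - 1).toNat, by omega⟩
    have e : ((k : ℤ) + 1) = ((k + 1 : ℕ) : ℤ) := by push_cast; ring
    rw [add_sub_cancel_right, e, rr_nat, rr_nat, qPoch_succ, zpow_natCast]
    have h1 := factor_ne_zero hQ hQ k
    have h2 := qPoch_ne_zero (factor_ne_zero hQ hQ) k
    have h3 : 1 - Q ^ (k + 1) ≠ 0 := by rw [pow_succ']; exact h1
    rw [← pow_succ']
    field_simp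

lemma rr_bdd {Q : ℂ} (hQ : ‖Q‖ < 1) : ∃ K : ℝ, 0 < K ∧ ∀ m, ‖rr Q m‖ ≤ K := by
  have h := (tendsto_qPoch Q hQ).inv₀ (qPochInf_ne_zero hQ (factor_ne_zero hQ hQ))
  obtain ⟨K, hK, hb⟩ := bounded_of_tendsto h
  refine ⟨K, hK, fun m => ?_⟩
  rcases lt_or_ge m 0 with h | h
  · rw [rr_neg _ h]; simpa using hK.le
  · lift m to ℕ using h
    rw [rr_nat]; exact hb m

/-- coefficients in the finite triple product -/
noncomputable def gg (Q : ℂ) (n l : ℕ) : ℂ :=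
  (-1) ^ l * Q ^ (l.choose 2) * (1 - Q ^ (2 * l + 1)) * rr Q (n + l + 1) * rr Q (n - l)

lemma gg_zero (Q : ℂ) {n l : ℕ} (h : n < l) : gg Q n l = 0 := by
  rw [gg, rr_neg Q (m := (n : ℤ) - l) (by omega), mul_zero]

lemma gg_rec {Q : ℂ} (hQ0 : Q ≠ 0) (hQ : ‖Q‖ < 1) (n l : ℕ) :
    (1 - Q ^ (2 * n + 1)) * (1 - Q ^ (2 * n + 2)) * gg Q (n + 1) (l + 1) =
      (1 + Q ^ (2 * n)) * gg Q n (l + 1) - Q ^ n * (gg Q n (l + 2) + gg Q n l) := by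
  have c1 : (l + 1).choose 2 = l.choose 2 + l := by
    rw [Nat.choose_succ_succ' l 1, Nat.choose_one_right, add_comm]
  have c2 : (l + 2).choose 2 = l.choose 2 + l + (l + 1) := by
    rw [Nat.choose_succ_succ' (l + 1) 1, Nat.choose_one_right, c1, add_comm]
  have a1 := rr_step hQ ((n : ℤ) + l + 3)
  have a2 := rr_step hQ ((n : ℤ) + l + 2)
  have b1 := rr_step hQ ((n : ℤ) - l)
  have b2 := rr_step hQ ((n : ℤ) - l - 1)
  simp only [gg, c1, c2]
  push_cast
  rw [show (n : ℤ) + 1 + (l + 1) + 1 = n + l + 3 by ring,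
    show (n : ℤ) + 1 - (l + 1) = n - l by ring,
    show (n : ℤ) + (l + 1) + 1 = n + l + 3 - 1 by ring,
    show (n : ℤ) - (l + 1) = n - l - 1 by ring,
    show (n : ℤ) + (l + 2) + 1 = n + l + 3 by ring,
    show (n : ℤ) - (l + 2) = n - l - 1 - 1 by ring,
    show (n : ℤ) + l + 1 = n + l + 2 - 1 by ring, a2,
    show (n : ℤ) + l + 2 = n + l + 3 - 1 by ring, a1, b2, b1]
  generalize rr Q (n + l + 3) = A
  generalize rr Q (n - l) = B
  have z1 : Q ^ ((n : ℤ) + l + 3) = Q ^ n * Q ^ l * Q ^ 3 := by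
    rw [zpow_add₀ hQ0, zpow_add₀ hQ0]; norm_cast
  have z2 : Q ^ ((n : ℤ) + l + 3 - 1) = Q ^ n * Q ^ l * Q ^ 2 := by
    rw [show (n : ℤ) + l + 3 - 1 = n + l + 2 by ring, zpow_add₀ hQ0, zpow_add₀ hQ0]; norm_cast
  have z3 : Q ^ ((n : ℤ) - l) = Q ^ n / Q ^ l := by
    rw [zpow_sub₀ hQ0]; norm_cast
  have z4 : Q ^ ((n : ℤ) - l - 1) = Q ^ n / (Q ^ l * Q) := by
    rw [zpow_sub₀ hQ0, zpow_sub₀ hQ0]; simp [div_div]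
  rw [z1, z2, z3, z4]
  simp only [pow_add, pow_mul', pow_one, mul_add]
  have hL : Q ^ l ≠ 0 := pow_ne_zero _ hQ0
  generalize Q ^ l = L at *
  generalize Q ^ n = N
  generalize Q ^ l.choose 2 = C
  generalize ((-1 : ℂ)) ^ l = S
  field_simp
  ring

lemma gg_rec0 {Q : ℂ} (hQ0 : Q ≠ 0) (hQ : ‖Q‖ < 1) (n : ℕ) :
    (1 - Q ^ (2 * n + 1)) * (1 - Q ^ (2 * n + 2)) * gg Q (n + 1) 0 =
      (1 + Q ^ (2 * n)) * gg Q n 0 - Q ^ n * (gg Q n 1 + gg Q n 0) := by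
  have a1 := rr_step hQ ((n : ℤ) + 2)
  have b1 := rr_step hQ ((n : ℤ) + 1)
  have b2 := rr_step hQ (n : ℤ)
  simp only [gg]
  push_cast
  rw [show (n : ℤ) + 1 + 0 + 1 = n + 2 by ring,
    show (n : ℤ) + 1 + 1 = n + 2 by ring,
    show (n : ℤ) + 0 + 1 = n + 2 - 1 by ring,
    show (n : ℤ) + 1 - 0 = n + 1 by ring,
    show (n : ℤ) - 0 = n + 1 - 1 by ring, b2, b1, a1]
  have e : rr Q n = (1 - Q ^ ((n : ℤ) + 1)) * rr Q (n + 1) := by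
    rw [← b1, add_sub_cancel_right]
  rw [e]
  have z1 : Q ^ ((n : ℤ) + 2) = Q ^ n * Q ^ 2 := by
    rw [zpow_add₀ hQ0]; norm_cast
  have z2 : Q ^ ((n : ℤ) + 1) = Q ^ n * Q := by
    rw [zpow_add₀ hQ0]; norm_cast; simp
  rw [z1, z2, zpow_natCast]
  simp only [pow_add, pow_mul', pow_one, Nat.choose_succ_self, pow_zero,
    Nat.choose_zero_succ]
  ring

lemma rec_sum (u : ℂ) (c g : ℕ → ℂ)
    (h1 : c 1 = (u - 1) * c 0) (hc : ∀ l, c (l + 2) = u * c (l + 1) - c l) (M : ℕ) :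
    c 0 * (g 1 + g 0) + ∑ l ∈ Finset.range M, c (l + 1) * (g (l + 2) + g l) =
      u * ∑ l ∈ Finset.range (M + 1), c l * g l + c M * g (M + 1) - c (M + 1) * g M := by
  induction M with
  | zero => simp [h1]; ring
  | succ M ih =>
    rw [Finset.sum_range_succ, ← add_assoc, ih, Finset.sum_range_succ _ (M + 1), hc]
    ring

lemma gg_sum {Q : ℂ} (hQ0 : Q ≠ 0) (hQ : ‖Q‖ < 1) (u : ℂ) (c : ℕ → ℂ)
    (h1 : c 1 = (u - 1) * c 0) (hc : ∀ l, c (l + 2) = u * c (l + 1) - c l) (n : ℕ) :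
    (∑ l ∈ Finset.range (n + 1), c l * gg Q n l) * qPoch Q Q (2 * n) =
      c 0 * ∏ j ∈ Finset.range n, (1 - u * Q ^ j + Q ^ (2 * j)) := by
  induction n with
  | zero =>
    have h3 : 1 - Q ≠ 0 := one_sub_ne_zero_of_norm hQ
    have e1 : rr Q 1 = (1 - Q)⁻¹ := by
      have := rr_nat Q 1
      simpa [qPoch] using this
    have e0 : rr Q 0 = 1 := by
      have := rr_nat Q 0
      simpa [qPoch] using this
    simp [gg, qPoch_zero, e1, e0, h3]
  | succ n ih =>
    rw [Finset.prod_range_succ, ← mul_assoc, ← ih, show 2 * (n + 1) = 2 * n + 1 + 1 by ring,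
      qPoch_succ, qPoch_succ]
    have key : (1 - Q ^ (2 * n + 1)) * (1 - Q ^ (2 * n + 2)) *
        (∑ l ∈ Finset.range (n + 1 + 1), c l * gg Q (n + 1) l) =
        (1 - u * Q ^ n + Q ^ (2 * n)) * ∑ l ∈ Finset.range (n + 1), c l * gg Q n l := by
      rw [Finset.sum_range_succ', mul_add, Finset.mul_sum]
      have e : ∀ l ∈ Finset.range (n + 1), (1 - Q ^ (2 * n + 1)) * (1 - Q ^ (2 * n + 2)) *
          (c (l + 1) * gg Q (n + 1) (l + 1)) = (1 + Q ^ (2 * n)) * (c (l + 1) * gg Q n (l + 1))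
            - Q ^ n * (c (l + 1) * (gg Q n (l + 2) + gg Q n l)) := by
        intro l _
        linear_combination c (l + 1) * gg_rec hQ0 hQ n l
      rw [Finset.sum_congr rfl e, Finset.sum_sub_distrib, ← Finset.mul_sum, ← Finset.mul_sum]
      have r := rec_sum u c (gg Q n) h1 hc (n + 1)
      have s : ∑ l ∈ Finset.range (n + 1 + 1), c l * gg Q n l =
          ∑ l ∈ Finset.range (n + 1), c l * gg Q n l := by
        rw [Finset.sum_range_succ, gg_zero Q (Nat.lt_succ_self n), mul_zero, add_zero]
      have s' := s
      rw [Finset.sum_range_succ'] at s'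
      rw [gg_zero Q (show n < n + 1 by omega), gg_zero Q (show n < n + 1 + 1 by omega), s] at r
      linear_combination c 0 * gg_rec0 hQ0 hQ n - Q ^ n * r + (1 + Q ^ (2 * n)) * s'
    linear_combination qPoch Q Q (2 * n) * key

noncomputable def tau (q : ℂ) (l n : ℕ) : ℂ :=
  (q ^ 2) ^ n * qPoch q (q ^ 2) n ^ 2 * rr (q ^ 2) (n + l + 1) * rr (q ^ 2) (n - l)

lemma norm_sq_lt {q : ℂ} (hq : ‖q‖ < 1) : ‖q ^ 2‖ < 1 := by
  rw [norm_pow]; exact pow_lt_one₀ (norm_nonneg _) hq (by norm_num)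

/-- uniform bound -/
lemma tau_bound {q : ℂ} (hq : ‖q‖ < 1) :
    ∃ K : ℝ, 0 < K ∧ ∀ (n : ℕ) (m k : ℤ),
      ‖qPoch q (q ^ 2) n ^ 2 * rr (q ^ 2) m * rr (q ^ 2) k‖ ≤ K := by
  obtain ⟨A, hA, hA'⟩ := bounded_of_tendsto (tendsto_qPoch q (norm_sq_lt hq))
  obtain ⟨B, hB, hB'⟩ := rr_bdd (norm_sq_lt hq)
  refine ⟨A ^ 2 * B * B, by positivity, fun n m k => ?_⟩
  rw [norm_mul, norm_mul, norm_pow]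
  gcongr
  · exact hA' n
  · exact hB' m
  · exact hB' k

lemma tau_summable {q : ℂ} (hq : ‖q‖ < 1) (l : ℕ) : Summable (tau q l) := by
  obtain ⟨K, hK, hb⟩ := tau_bound hq
  refine Summable.of_norm_bounded (g := fun n => ‖q ^ 2‖ ^ n * K)
    ((summable_geometric_of_lt_one (norm_nonneg _) (norm_sq_lt hq)).mul_right K) fun n => ?_
  rw [tau, mul_assoc, mul_assoc, norm_mul, ← mul_assoc (_ ^ 2), norm_pow]
  gcongr
  exact hb _ _ _

noncomputable def cert (q : ℂ) (l n : ℕ) : ℂ :=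
  (q ^ 2) ^ n * ((1 - q ^ 4 * ((q ^ 2) ^ l) ^ 2) / ((q ^ 2) ^ l * q ^ 2)) *
    (qPoch q (q ^ 2) n ^ 2 * rr (q ^ 2) (n + l + 1) * rr (q ^ 2) (n - l - 1))

lemma cert_zero (q : ℂ) (l : ℕ) : cert q l 0 = 0 := by
  rw [cert, rr_neg (m := ((0 : ℕ) : ℤ) - l - 1) _ (by omega)]; simp

lemma cert_tendsto {q : ℂ} (hq : ‖q‖ < 1) (l : ℕ) : Tendsto (cert q l) atTop (𝓝 0) := by
  obtain ⟨K, hK, hb⟩ := tau_bound hq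
  have h1 : Tendsto (fun n : ℕ => ‖q ^ 2‖ ^ n *
      ‖(1 - q ^ 4 * ((q ^ 2) ^ l) ^ 2) / ((q ^ 2) ^ l * q ^ 2)‖ * K) atTop (𝓝 0) := by
    have := (tendsto_pow_atTop_nhds_zero_of_lt_one (norm_nonneg _) (norm_sq_lt hq)).mul_const
      (‖(1 - q ^ 4 * ((q ^ 2) ^ l) ^ 2) / ((q ^ 2) ^ l * q ^ 2)‖ * K)
    simpa [mul_assoc] using this
  refine squeeze_zero_norm (fun n => ?_) h1
  rw [cert, norm_mul, norm_mul, norm_pow _ n]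
  gcongr
  exact hb _ _ _

lemma tau_tele {q : ℂ} (hq0 : q ≠ 0) (hq : ‖q‖ < 1) (l n : ℕ) :
    tau q l n * ((1 - q * (q ^ 2) ^ l) ^ 2 / (q ^ 2) ^ l) -
      tau q (l + 1) n * ((1 - q * (q ^ 2) ^ (l + 1)) ^ 2 / (q ^ 2) ^ (l + 1)) =
      cert q l (n + 1) - cert q l n := by
  have hQ := norm_sq_lt hq
  have hQ0 : q ^ 2 ≠ 0 := pow_ne_zero _ hq0
  have a1 := rr_step hQ ((n : ℤ) + l + 2)
  have b1 := rr_step hQ ((n : ℤ) - l)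
  simp only [tau, cert, qPoch_succ]
  push_cast
  rw [show (n : ℤ) + (l + 1) + 1 = n + l + 2 by ring,
    show (n : ℤ) + 1 + l + 1 = n + l + 2 by ring,
    show (n : ℤ) - (l + 1) = n - l - 1 by ring,
    show (n : ℤ) + 1 - l - 1 = n - l by ring,
    show (n : ℤ) + l + 1 = n + l + 2 - 1 by ring, a1, b1]
  have z1 : (q ^ 2) ^ ((n : ℤ) + l + 2) = (q ^ 2) ^ n * (q ^ 2) ^ l * (q ^ 2) ^ 2 := by
    rw [zpow_add₀ hQ0, zpow_add₀ hQ0]; norm_cast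
  have z3 : (q ^ 2) ^ ((n : ℤ) - l) = (q ^ 2) ^ n / (q ^ 2) ^ l := by
    rw [zpow_sub₀ hQ0]; norm_cast
  rw [z1, z3]
  generalize rr (q ^ 2) (n + l + 2) = A
  generalize rr (q ^ 2) (n - l) = B
  rw [pow_succ (q ^ 2) l, pow_succ (q ^ 2) n]
  have hL : (q ^ 2) ^ l ≠ 0 := pow_ne_zero _ hQ0
  generalize (q ^ 2) ^ l = L at *
  generalize (q ^ 2) ^ n = N
  generalize qPoch q (q ^ 2) n = S
  field_simp
  ring

noncomputable def WW (q : ℂ) (l : ℕ) : ℂ :=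
  (∑' n, tau q l n) * ((1 - q * (q ^ 2) ^ l) ^ 2 / (q ^ 2) ^ l)

lemma WW_succ {q : ℂ} (hq0 : q ≠ 0) (hq : ‖q‖ < 1) (l : ℕ) : WW q l = WW q (l + 1) := by
  have s1 := (tau_summable hq l).mul_right ((1 - q * (q ^ 2) ^ l) ^ 2 / (q ^ 2) ^ l)
  have s2 := (tau_summable hq (l + 1)).mul_right
    ((1 - q * (q ^ 2) ^ (l + 1)) ^ 2 / (q ^ 2) ^ (l + 1))
  have h := (s1.sub s2).hasSum.tendsto_sum_nat
  rw [s1.tsum_sub s2] at h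
  simp_rw [tau_tele hq0 hq, Finset.sum_range_sub, cert_zero, sub_zero] at h
  have := tendsto_nhds_unique h (cert_tendsto hq l)
  rw [WW, WW, ← tsum_mul_right, ← tsum_mul_right]
  exact sub_eq_zero.mp this

lemma euler_sum {Q : ℂ} (hQ : ‖Q‖ < 1) : HasSum (fun m : ℕ => Q ^ m * rr Q m) (qPochInf Q Q)⁻¹ := by
  obtain ⟨K, hK, hb⟩ := rr_bdd hQ
  have hs : Summable (fun m : ℕ => Q ^ m * rr Q m) := by
    refine Summable.of_norm_bounded (g := fun n => ‖Q‖ ^ n * K)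
      ((summable_geometric_of_lt_one (norm_nonneg _) hQ).mul_right K) fun n => ?_
    rw [norm_mul, norm_pow]
    gcongr
    exact hb _
  have hp : ∀ M : ℕ, ∑ m ∈ Finset.range (M + 1), Q ^ m * rr Q m = (qPoch Q Q M)⁻¹ := by
    intro M
    rw [← rr_nat]
    induction M with
    | zero => simp
    | succ M ih =>
      rw [Finset.sum_range_succ, ih]
      have := rr_step hQ ((M + 1 : ℕ) : ℤ)
      rw [zpow_natCast] at this
      push_cast at this ⊢
      rw [add_sub_cancel_right] at this
      rw [this]; ring
  have h1 := (tendsto_add_atTop_iff_nat 1).mpr hs.hasSum.tendsto_sum_nat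
  simp_rw [hp] at h1
  have h2 := (tendsto_qPoch Q hQ).inv₀ (qPochInf_ne_zero hQ (factor_ne_zero hQ hQ))
  rw [← tendsto_nhds_unique h1 h2]
  exact hs.hasSum

lemma WW_shift {q : ℂ} (hq0 : q ≠ 0) (l : ℕ) :
    WW q l = ∑' m : ℕ, (q ^ 2) ^ m * (qPoch q (q ^ 2) (m + l) ^ 2 * rr (q ^ 2) ((m + (2 * l + 1) : ℕ) : ℤ) *
      rr (q ^ 2) m) * (1 - q * (q ^ 2) ^ l) ^ 2 := by
  have hinj : Function.Injective (fun m : ℕ => m + l) := fun a b h => by simpa using h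
  have hQ0 : q ^ 2 ≠ 0 := pow_ne_zero _ hq0
  have hL : (q ^ 2) ^ l ≠ 0 := pow_ne_zero _ hQ0
  rw [WW, ← hinj.tsum_eq, ← tsum_mul_right]
  · refine tsum_congr fun m => ?_
    simp only [tau]
    push_cast
    rw [add_sub_cancel_right, pow_add, show (m : ℤ) + l + l + 1 = m + (2 * l + 1) by ring]
    field_simp
  · intro n hn
    by_contra hc
    apply hn
    have : n < l := by
      by_contra h'
      exact hc ⟨n - l, by simp; omega⟩
    rw [tau, rr_neg (m := (n : ℤ) - l) _ (by omega), mul_zero]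

lemma WW_lim {q : ℂ} (hq0 : q ≠ 0) (hq : ‖q‖ < 1) :
    Tendsto (WW q) atTop (𝓝 (qPochInf q (q ^ 2) ^ 2 / qPochInf (q ^ 2) (q ^ 2) ^ 2)) := by
  obtain ⟨K, hK, hb⟩ := tau_bound hq
  have hQ := norm_sq_lt hq
  have hP := qPochInf_ne_zero hQ (factor_ne_zero hQ hQ)
  have e : qPochInf q (q ^ 2) ^ 2 / qPochInf (q ^ 2) (q ^ 2) ^ 2 =
      ∑' m : ℕ, (q ^ 2) ^ m * (qPochInf q (q ^ 2) ^ 2 * (qPochInf (q ^ 2) (q ^ 2))⁻¹ *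
        rr (q ^ 2) m) * (1 - q * 0) ^ 2 := by
    have := (euler_sum hQ).mul_left (qPochInf q (q ^ 2) ^ 2 * (qPochInf (q ^ 2) (q ^ 2))⁻¹)
    rw [show qPochInf q (q ^ 2) ^ 2 / qPochInf (q ^ 2) (q ^ 2) ^ 2 =
      qPochInf q (q ^ 2) ^ 2 * (qPochInf (q ^ 2) (q ^ 2))⁻¹ * (qPochInf (q ^ 2) (q ^ 2))⁻¹ by
        field_simp, ← this.tsum_eq]
    refine tsum_congr fun m => ?_
    ring
  have hrr : Tendsto (fun n : ℕ => rr (q ^ 2) n) atTop (𝓝 (qPochInf (q ^ 2) (q ^ 2))⁻¹) := by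
    simp_rw [rr_nat]
    exact (tendsto_qPoch _ hQ).inv₀ hP
  rw [e, show WW q = _ from funext (WW_shift hq0)]
  refine tendsto_tsum_of_dominated_convergence (bound := fun m => ‖q ^ 2‖ ^ m * K * 4)
    (((summable_geometric_of_lt_one (norm_nonneg _) hQ).mul_right K).mul_right 4) ?_ ?_
  · intro m
    refine Tendsto.mul (Tendsto.mul tendsto_const_nhds (Tendsto.mul (Tendsto.mul ?_ ?_)
      tendsto_const_nhds)) ?_
    · refine ((tendsto_qPoch q hQ).comp ?_).pow 2
      exact tendsto_atTop_mono (fun l => by simp only [id]; omega) tendsto_id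
    · exact hrr.comp (tendsto_atTop_mono (fun l => by simp; omega) tendsto_id)
    · refine Tendsto.pow (tendsto_const_nhds.sub (tendsto_const_nhds.mul ?_)) 2
      exact tendsto_pow_atTop_nhds_zero_of_norm_lt_one hQ
  · refine Eventually.of_forall fun l m => ?_
    rw [norm_mul, norm_mul, norm_pow _ m]
    gcongr
    · exact hb _ _ _
    · rw [norm_pow]
      have : ‖1 - q * (q ^ 2) ^ l‖ ≤ 2 := by
        refine (norm_sub_le _ _).trans ?_
        rw [norm_one, norm_mul, norm_pow]
        have := mul_le_one₀ hq.le (by positivity) (pow_le_one₀ (norm_nonneg _) hQ.le (n := l))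
        linarith
      calc _ ≤ (2 : ℝ) ^ 2 := by gcongr
        _ = 4 := by norm_num

lemma tau_sum {q : ℂ} (hq0 : q ≠ 0) (hq : ‖q‖ < 1) (l : ℕ) :
    ∑' n, tau q l n = qPochInf q (q ^ 2) ^ 2 / qPochInf (q ^ 2) (q ^ 2) ^ 2 *
      ((q ^ 2) ^ l / (1 - q * (q ^ 2) ^ l) ^ 2) := by
  have hc : ∀ k, WW q k = WW q 0 := by
    intro k
    induction k with
    | zero => rfl
    | succ k ih => rw [← WW_succ hq0 hq, ih]
  have h := WW_lim hq0 hq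
  rw [show WW q = fun _ => WW q 0 from funext hc] at h
  have h2 := tendsto_nhds_unique tendsto_const_nhds h
  rw [← h2, ← hc l, WW]
  have hL : (q ^ 2) ^ l ≠ 0 := pow_ne_zero _ (pow_ne_zero _ hq0)
  have h3 : 1 - q * (q ^ 2) ^ l ≠ 0 := factor_ne_zero hq (norm_sq_lt hq) l
  field_simp

lemma qPochInf_sq (a : ℂ) {q : ℂ} (hq : ‖q‖ < 1) :
    qPochInf (-a) q * qPochInf a q = qPochInf (a ^ 2) (q ^ 2) := by
  rw [qPochInf, qPochInf, qPochInf,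
    ← (multipliable_aux (-a) hq).tprod_mul (multipliable_aux a hq)]
  refine tprod_congr fun j => ?_
  ring

lemma zeta_rel {ζ : ℂ} (hζ : IsPrimitiveRoot ζ 3) : ζ⁻¹ = ζ ^ 2 ∧ 1 + ζ + ζ ^ 2 = 0 ∧ ζ ^ 3 = 1 := by
  have h3 : ζ ^ 3 = 1 := hζ.pow_eq_one
  have h0 : ζ ≠ 0 := hζ.ne_zero (by norm_num)
  have h1 : ζ ≠ 1 := hζ.ne_one (by norm_num)
  refine ⟨?_, ?_, h3⟩
  · field_simp; exact h3.symm
  · have : (ζ - 1) * (1 + ζ + ζ ^ 2) = 0 := by linear_combination h3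
    exact (mul_eq_zero.mp this).resolve_left (sub_ne_zero.mpr h1)

lemma qPochInf_zeta {ζ : ℂ} (hζ : IsPrimitiveRoot ζ 3) {Q : ℂ} (hQ : ‖Q‖ < 1) :
    qPochInf Q Q * (qPochInf (ζ * Q) Q * qPochInf (ζ⁻¹ * Q) Q) =
      ∏' n : ℕ, (1 - (Q ^ 3) ^ (n + 1)) := by
  obtain ⟨e1, e2, e3⟩ := zeta_rel hζ
  rw [qPochInf, qPochInf, qPochInf,
    ← (multipliable_aux _ hQ).tprod_mul (multipliable_aux _ hQ),
    ← (multipliable_aux _ hQ).tprod_mul ((multipliable_aux _ hQ).mul (multipliable_aux _ hQ))]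
  refine tprod_congr fun j => ?_
  rw [e1, show (Q ^ 3) ^ (j + 1) = (Q * Q ^ j) ^ 3 by ring]
  generalize Q ^ j = y
  linear_combination (-(Q * y) - (Q * y) ^ 2 * ζ + 2 * (Q * y) ^ 2) * e2 + (Q ^ 2 * y ^ 2 * 2 - Q ^ 3 * y ^ 3) * e3

/-- indicator of `l ≡ 1 mod 3`. -/
noncomputable def dl (l : ℕ) : ℂ := if l % 3 = 1 then 1 else 0

lemma dl_rel (l : ℕ) : dl l + dl (l + 1) + dl (l + 2) = 1 := by
  have : l % 3 = 0 ∨ l % 3 = 1 ∨ l % 3 = 2 := by omega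
  rcases this with h | h | h
  · simp [dl, h, Nat.add_mod]
  · simp [dl, h, Nat.add_mod]
  · simp [dl, h, Nat.add_mod]

lemma qPoch_zeta {ζ : ℂ} (hζ : IsPrimitiveRoot ζ 3) (Q : ℂ) (n : ℕ) :
    qPoch (ζ * Q) Q n * qPoch (ζ⁻¹ * Q) Q n =
      ∏ j ∈ Finset.range n, (1 - (-1) * Q ^ (j + 1) + Q ^ (2 * (j + 1))) := by
  obtain ⟨e1, e2, e3⟩ := zeta_rel hζ
  rw [qPoch, qPoch, ← Finset.prod_mul_distrib]
  refine Finset.prod_congr rfl fun j _ => ?_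
  rw [e1, show Q ^ (2 * (j + 1)) = (Q * Q ^ j) ^ 2 by ring, show Q ^ (j + 1) = Q * Q ^ j by ring]
  generalize Q ^ j = y
  linear_combination (-(Q * y)) * e2 + (Q ^ 2 * y ^ 2) * e3

lemma dl_sum {ζ : ℂ} (hζ : IsPrimitiveRoot ζ 3) {Q : ℂ} (hQ0 : Q ≠ 0) (hQ : ‖Q‖ < 1) (n : ℕ) :
    qPoch (ζ * Q) Q n * qPoch (ζ⁻¹ * Q) Q n =
      - (∑ l ∈ Finset.range (n + 1 + 1), dl l * gg Q (n + 1) l) * qPoch Q Q (2 * (n + 1)) := by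
  have h1 := gg_sum hQ0 hQ 2 (fun _ => 1) (by norm_num) (by intro; norm_num) (n + 1)
  have h2 := gg_sum hQ0 hQ (-1) (fun l => 1 - 3 * dl l) (by norm_num [dl]) (by
    intro l
    linear_combination (-3) * dl_rel l) (n + 1)
  rw [Finset.prod_range_succ'] at h1 h2
  rw [← qPoch_zeta hζ] at h2
  have hd : dl 0 = 0 := by simp [dl]
  have hs : ∑ l ∈ Finset.range (n + 1 + 1), (1 - 3 * dl l) * gg Q (n + 1) l =
      ∑ l ∈ Finset.range (n + 1 + 1), 1 * gg Q (n + 1) l -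
        3 * ∑ l ∈ Finset.range (n + 1 + 1), dl l * gg Q (n + 1) l := by
    rw [Finset.mul_sum, ← Finset.sum_sub_distrib]
    refine Finset.sum_congr rfl fun l _ => ?_
    ring
  rw [hs, hd] at h2
  have h1' : (∑ l ∈ Finset.range (n + 1 + 1), 1 * gg Q (n + 1) l) * qPoch Q Q (2 * (n + 1)) = 0 := by
    rw [h1]; norm_num
  linear_combination (-1/3) * h2 + (1/3) * h1'

noncomputable def ss (Q : ℂ) (l : ℕ) : ℂ :=
  dl l * ((-1) ^ l * Q ^ (l.choose 2) * (1 - Q ^ (2 * l + 1)))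

lemma term_eq {ζ : ℂ} (hζ : IsPrimitiveRoot ζ 3) {q : ℂ} (hq0 : q ≠ 0) (hq : ‖q‖ < 1) (n : ℕ) :
    q ^ (2 * (n + 1)) * qPochInf (-q ^ (2 * (n + 1) + 1)) q *
        qPochInf (q ^ (2 * (n + 1) + 1)) q /
      (qPochInf (ζ * q ^ (2 * (n + 1))) (q ^ 2) *
        qPochInf (ζ⁻¹ * q ^ (2 * (n + 1))) (q ^ 2) *
        qPochInf (q ^ (2 * (n + 1) + 1)) (q ^ 2) ^ 2) =
    - (qPochInf (q ^ 2) (q ^ 2) / (qPochInf q (q ^ 2) ^ 2 *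
      (qPochInf (ζ * q ^ 2) (q ^ 2) * qPochInf (ζ⁻¹ * q ^ 2) (q ^ 2)))) *
      ∑' l, ss (q ^ 2) l * tau q l (n + 1) := by
  have hQ := norm_sq_lt hq
  have hQ0 : q ^ 2 ≠ 0 := pow_ne_zero _ hq0
  have hn : ‖ζ‖ = 1 := hζ.norm'_eq_one (by norm_num)
  have hz1 : ‖ζ * q ^ 2‖ < 1 := by rwa [norm_mul, hn, one_mul]
  have hz2 : ‖ζ⁻¹ * q ^ 2‖ < 1 := by rwa [norm_mul, norm_inv, hn, inv_one, one_mul]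
  have hts : ∑' l, ss (q ^ 2) l * tau q l (n + 1) = (q ^ 2) ^ (n + 1) * qPoch q (q ^ 2) (n + 1) ^ 2 *
      ∑ l ∈ Finset.range (n + 1 + 1), dl l * gg (q ^ 2) (n + 1) l := by
    rw [tsum_eq_sum (s := Finset.range (n + 1 + 1)), Finset.mul_sum]
    · refine Finset.sum_congr rfl fun l _ => ?_
      rw [ss, tau, gg]; ring
    · intro l hl
      rw [tau, rr_neg (m := ((n + 1 : ℕ) : ℤ) - l) _ (by simp at hl; omega)]; ring
  have hd := dl_sum hζ hQ0 hQ n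
  have hp1 := qPoch_ne_zero (factor_ne_zero hz1 hQ) n
  have hp2 := qPoch_ne_zero (factor_ne_zero hz2 hQ) n
  have hp3 := qPoch_ne_zero (factor_ne_zero hq hQ) (n + 1)
  have hp4 := qPoch_ne_zero (factor_ne_zero hQ hQ) (2 * (n + 1))
  have s1 := qPochInf_split (ζ * q ^ 2) hQ n
  have s2 := qPochInf_split (ζ⁻¹ * q ^ 2) hQ n
  have s3 := qPochInf_split q hQ (n + 1)
  have s4 := qPochInf_split (q ^ 2) hQ (2 * (n + 1))
  have i1 := qPochInf_ne_zero hQ (factor_ne_zero hz1 hQ)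
  have i2 := qPochInf_ne_zero hQ (factor_ne_zero hz2 hQ)
  have i3 := qPochInf_ne_zero hQ (factor_ne_zero hq hQ)
  rw [mul_assoc (q ^ (2 * (n + 1))), qPochInf_sq _ hq]
  rw [show ζ * q ^ (2 * (n + 1)) = ζ * q ^ 2 * (q ^ 2) ^ n by ring,
    show ζ⁻¹ * q ^ (2 * (n + 1)) = ζ⁻¹ * q ^ 2 * (q ^ 2) ^ n by ring,
    show (q ^ (2 * (n + 1) + 1)) ^ 2 = q ^ 2 * (q ^ 2) ^ (2 * (n + 1)) by ring,
    show q ^ (2 * (n + 1) + 1) = q * (q ^ 2) ^ (n + 1) by ring, hts, pow_mul]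
  rw [s1] at i1 ⊢
  rw [s2] at i2 ⊢
  rw [s3] at i3 ⊢
  rw [s4]
  have j1 := right_ne_zero_of_mul i1
  have j2 := right_ne_zero_of_mul i2
  have j3 := right_ne_zero_of_mul i3
  generalize qPochInf (ζ * q ^ 2 * (q ^ 2) ^ n) (q ^ 2) = I1 at *
  generalize qPochInf (ζ⁻¹ * q ^ 2 * (q ^ 2) ^ n) (q ^ 2) = I2 at *
  generalize qPochInf (q * (q ^ 2) ^ (n + 1)) (q ^ 2) = I3 at *
  generalize qPochInf (q ^ 2 * (q ^ 2) ^ (2 * (n + 1))) (q ^ 2) = I4 at *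
  generalize (∑ l ∈ Finset.range (n + 1 + 1), dl l * gg (q ^ 2) (n + 1) l) = S at *
  generalize qPoch (ζ * q ^ 2) (q ^ 2) n = p1 at *
  generalize qPoch (ζ⁻¹ * q ^ 2) (q ^ 2) n = p2 at *
  generalize qPoch q (q ^ 2) (n + 1) = p3 at *
  generalize qPoch (q ^ 2) (q ^ 2) (2 * (n + 1)) = p4 at *
  generalize (q ^ 2) ^ (n + 1) = X
  rw [div_eq_iff (by positivity)]
  field_simp
  linear_combination X * I4 * hd

lemma SB_eq1 {ζ : ℂ} (hζ : IsPrimitiveRoot ζ 3) {q : ℂ} (hq0 : q ≠ 0) (hq : ‖q‖ < 1) :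
    SB ζ q = - (qPochInf (q ^ 2) (q ^ 2) / (qPochInf q (q ^ 2) ^ 2 *
      (qPochInf (ζ * q ^ 2) (q ^ 2) * qPochInf (ζ⁻¹ * q ^ 2) (q ^ 2)))) *
      ∑' l, ss (q ^ 2) l * ∑' n, tau q l n := by
  have hQ := norm_sq_lt hq
  have hQ0 : 0 < ‖q ^ 2‖ := norm_pos_iff.mpr (pow_ne_zero _ hq0)
  obtain ⟨K, hK, hb⟩ := tau_bound hq
  rw [SB, tsum_congr (term_eq hζ hq0 hq), tsum_mul_left]
  congr 1
  have hsum : Summable (Function.uncurry fun (l n : ℕ) => ss (q ^ 2) l * tau q l n) := by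
    have h1 : Summable fun l : ℕ => ‖q ^ 2‖ ^ (l - 1) := by
      refine (summable_nat_add_iff 1).mp ?_
      simpa using summable_geometric_of_lt_one (norm_nonneg _) hQ
    have h2 := (summable_geometric_of_lt_one (norm_nonneg _) hQ)
    have h3 := (h1.mul_of_nonneg h2 (fun _ => by positivity) (fun _ => by positivity)).mul_right (2 * K)
    refine Summable.of_norm_bounded h3 ?_
    rintro ⟨l, n⟩
    simp only [Function.uncurry]
    have b1 : ‖ss (q ^ 2) l‖ ≤ ‖q ^ 2‖ ^ (l - 1) * 2 := by
      have d : ‖dl l‖ ≤ 1 := by unfold dl; split_ifs <;> simp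
      have e : ‖1 - (q ^ 2) ^ (2 * l + 1)‖ ≤ 2 := by
        refine (norm_sub_le _ _).trans ?_
        rw [norm_one, norm_pow]
        have := (pow_le_one₀ (norm_nonneg _) hQ.le (n := 2 * l + 1))
        linarith
      have f : ‖q ^ 2‖ ^ (l.choose 2) ≤ ‖q ^ 2‖ ^ (l - 1) := by
        apply pow_le_pow_of_le_one (norm_nonneg _) hQ.le
        rcases l with _ | l
        · simp
        · rw [Nat.choose_succ_succ' l 1, Nat.choose_one_right]; omega
      rw [ss, norm_mul, norm_mul, norm_mul, norm_pow, norm_pow _ (l.choose 2), norm_neg, norm_one, one_pow,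
        one_mul]
      calc _ ≤ 1 * (‖q ^ 2‖ ^ (l - 1) * 2) := by gcongr
        _ = _ := one_mul _
    have b2 : ‖tau q l n‖ ≤ ‖q ^ 2‖ ^ n * K := by
      rw [tau, mul_assoc, mul_assoc, norm_mul, ← mul_assoc (_ ^ 2), norm_pow]
      gcongr
      exact hb _ _ _
    rw [norm_mul]
    calc _ ≤ (‖q ^ 2‖ ^ (l - 1) * 2) * (‖q ^ 2‖ ^ n * K) := by gcongr
      _ = _ := by ring
  have hc := hsum.tsum_comm
  simp_rw [tsum_mul_left] at hc
  rw [← hc]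
  have hs2 : Summable fun n => ∑' l, ss (q ^ 2) l * tau q l n := by
    have := hsum.prod_symm.prod
    simpa [Function.uncurry] using this
  rw [hs2.tsum_eq_zero_add]
  have h0 : ∑' l, ss (q ^ 2) l * tau q l 0 = 0 := by
    rw [tsum_congr (g := fun _ => 0), tsum_zero]
    intro l
    rcases l with _ | l
    · simp [ss, dl]
    · rw [tau, rr_neg (m := ((0 : ℕ) : ℤ) - (l + 1 : ℕ)) _ (by omega)]; ring
  rw [h0, zero_add]

noncomputable def HH (x : ℂ) : ℂ :=
  (∏' n : ℕ, (1 - (x ^ 2) ^ (n + 1)))⁻¹ *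
    ∑' i : ℕ, (-1) ^ i * x ^ (3 * (i * (i + 1))) * ((1 + x ^ (2 * i + 1)) / (1 - x ^ (2 * i + 1)))

lemma SB_eq2 {ζ : ℂ} (hζ : IsPrimitiveRoot ζ 3) {q : ℂ} (hq : ‖q‖ < 1) :
    SB ζ q = q ^ 2 * HH (q ^ 3) := by
  by_cases hq0 : q = 0
  · subst hq0
    simp [SB]
  have hQ := norm_sq_lt hq
  have hn : ‖ζ‖ = 1 := hζ.norm'_eq_one (by norm_num)
  have hz1 : ‖ζ * q ^ 2‖ < 1 := by rwa [norm_mul, hn, one_mul]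
  have hz2 : ‖ζ⁻¹ * q ^ 2‖ < 1 := by rwa [norm_mul, norm_inv, hn, inv_one, one_mul]
  have i1 := qPochInf_ne_zero hQ (factor_ne_zero hz1 hQ)
  have i2 := qPochInf_ne_zero hQ (factor_ne_zero hz2 hQ)
  have i3 := qPochInf_ne_zero hQ (factor_ne_zero hq hQ)
  have i4 := qPochInf_ne_zero hQ (factor_ne_zero hQ hQ)
  rw [SB_eq1 hζ hq0 hq, HH, show (q ^ 3) ^ 2 = (q ^ 2) ^ 3 by ring, ← qPochInf_zeta hζ hQ]
  simp_rw [tau_sum hq0 hq]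
  have hinj : Function.Injective (fun i : ℕ => 3 * i + 1) := fun a b h => by
    simp only at h; omega
  rw [← hinj.tsum_eq, ← mul_assoc (q ^ 2), ← tsum_mul_left, ← tsum_mul_left]
  · refine tsum_congr fun i => ?_
    have hc : (3 * i + 1).choose 2 + (3 * i + 1) = (3 * i + 2).choose 2 := by
      rw [Nat.choose_succ_succ' (3 * i + 1) 1, Nat.choose_one_right, add_comm]
    have hc2 : 2 * (3 * i + 2).choose 2 = 2 + 3 * (3 * (i * (i + 1))) := by
      rw [Nat.choose_two_right, Nat.mul_div_cancel' (Nat.even_mul_pred_self _).two_dvd]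
      simp; ring
    have e1 : (q ^ 2) ^ ((3 * i + 1).choose 2) * (q ^ 2) ^ (3 * i + 1) =
        q ^ 2 * (q ^ 3) ^ (3 * (i * (i + 1))) := by
      rw [← pow_add, hc, ← pow_mul, hc2]; ring
    have e2 : (q ^ 3) ^ (2 * i + 1) = q * (q ^ 2) ^ (3 * i + 1) := by ring
    have e3 : 1 - (q ^ 2) ^ (2 * (3 * i + 1) + 1) =
      (1 - q * (q ^ 2) ^ (3 * i + 1)) * (1 + q * (q ^ 2) ^ (3 * i + 1)) := by ring
    have e4 : ((-1 : ℂ)) ^ (3 * i + 1) = - (-1) ^ i := by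
      rw [pow_succ, pow_mul]; norm_num
    have e5 : dl (3 * i + 1) = 1 := by simp [dl, Nat.add_mod]
    have h3 : 1 - q * (q ^ 2) ^ (3 * i + 1) ≠ 0 := factor_ne_zero hq hQ _
    simp only [ss]
    rw [e2, e3, e4, e5]
    generalize (q ^ 2) ^ (3 * i + 1) = Y at *
    generalize (q ^ 2) ^ ((3 * i + 1).choose 2) = Z at *
    generalize (q ^ 3) ^ (3 * (i * (i + 1))) = T at *
    generalize qPochInf (ζ * q ^ 2) (q ^ 2) = I1 at *
    generalize qPochInf (ζ⁻¹ * q ^ 2) (q ^ 2) = I2 at *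
    generalize qPochInf q (q ^ 2) = I3 at *
    generalize qPochInf (q ^ 2) (q ^ 2) = I4 at *
    field_simp
    linear_combination (1 + q * Y) * e1
  · intro l hl
    by_contra hc
    apply hl
    have : l % 3 ≠ 1 := fun h => hc ⟨l / 3, by simp only; omega⟩
    simp [ss, dl, this]

lemma HH_diff : DifferentiableOn ℂ HH (Metric.ball 0 1) := by
  have h1 : DifferentiableOn ℂ (fun x : ℂ => ∏' n : ℕ, (1 - (x ^ 2) ^ (n + 1))) (Metric.ball 0 1) := by
    refine ModularForm.differentiableOn_tprod_one_sub_pow.comp (f := fun x : ℂ => x ^ 2)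
      (by fun_prop) ?_
    intro x hx
    simp only [Metric.mem_ball, dist_zero_right] at hx ⊢
    exact norm_sq_lt hx
  have h1' : ∀ x ∈ Metric.ball (0 : ℂ) 1, ∏' n : ℕ, (1 - (x ^ 2) ^ (n + 1)) ≠ 0 := by
    intro x hx
    simp only [Metric.mem_ball, dist_zero_right] at hx
    have := qPochInf_ne_zero (norm_sq_lt hx) (factor_ne_zero (norm_sq_lt hx) (norm_sq_lt hx))
    simpa [qPochInf, ← pow_succ'] using this
  refine (h1.inv h1').mul ?_
  intro x hx
  simp only [Metric.mem_ball, dist_zero_right] at hx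
  obtain ⟨r, hr1, hr2⟩ := exists_between hx
  have hr0 : 0 ≤ r := (norm_nonneg _).trans hr1.le
  have hd : DifferentiableOn ℂ (fun x : ℂ => ∑' i : ℕ, (-1) ^ i * x ^ (3 * (i * (i + 1))) *
      ((1 + x ^ (2 * i + 1)) / (1 - x ^ (2 * i + 1)))) (Metric.ball 0 r) := by
    have hs : Summable fun i : ℕ => r ^ i * (2 / (1 - r)) :=
      (summable_geometric_of_lt_one hr0 hr2).mul_right _
    have hpow : ∀ w ∈ Metric.ball (0 : ℂ) r, ∀ i : ℕ, ‖w ^ (2 * i + 1)‖ ≤ r := by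
      intro w hw i
      simp only [Metric.mem_ball, dist_zero_right] at hw
      rw [norm_pow]
      calc _ ≤ r ^ (2 * i + 1) := by gcongr
        _ ≤ r ^ 1 := pow_le_pow_of_le_one hr0 hr2.le (by omega)
        _ = r := pow_one r
    refine Complex.differentiableOn_tsum_of_summable_norm hs ?_ Metric.isOpen_ball ?_
    · intro i
      refine DifferentiableOn.mul (by fun_prop) (DifferentiableOn.div (by fun_prop) (by fun_prop) ?_)
      intro w hw
      exact one_sub_ne_zero_of_norm ((hpow w hw i).trans_lt hr2)
    · intro i w hw
      have h := hpow w hw i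
      simp only [Metric.mem_ball, dist_zero_right] at hw
      rw [norm_mul, norm_mul, norm_div, norm_pow, norm_neg, norm_one, one_pow, one_mul,
        norm_pow _ (3 * _)]
      have a1 : ‖w‖ ^ (3 * (i * (i + 1))) ≤ r ^ i := by
        calc _ ≤ r ^ (3 * (i * (i + 1))) := by gcongr
          _ ≤ r ^ i := pow_le_pow_of_le_one hr0 hr2.le (by nlinarith)
      have a2 : ‖1 + w ^ (2 * i + 1)‖ ≤ 2 := by
        refine (norm_add_le _ _).trans ?_
        rw [norm_one]; linarith
      have a3 : 1 - r ≤ ‖1 - w ^ (2 * i + 1)‖ := by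
        have := norm_sub_norm_le (1 : ℂ) (w ^ (2 * i + 1))
        rw [norm_one] at this; linarith
      have : 0 < 1 - r := by linarith
      gcongr
  exact (hd.differentiableAt (Metric.isOpen_ball.mem_nhds (by simpa using hr1))).differentiableWithinAt

end SBaux

/-- The coefficient of `q^N` in `S̄B(ζ₃, q)` vanishes whenever `N ≡ 0, 1 (mod 3)`. -/
theorem SB_coeff_vanish (ζ : ℂ) (hζ : IsPrimitiveRoot ζ 3) :
    ∃ a : ℕ → ℂ,
      (∀ q : ℂ, ‖q‖ < 1 → SB ζ q = ∑' N : ℕ, a N * q ^ N) ∧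
      ∀ N : ℕ, N % 3 = 0 ∨ N % 3 = 1 → a N = 0 := by
  refine ⟨fun N => if N % 3 = 2 then
    ((((N - 2) / 3).factorial : ℂ)⁻¹ * iteratedDeriv ((N - 2) / 3) SBaux.HH 0) else 0, ?_, ?_⟩
  · intro q hq
    have hx : q ^ 3 ∈ Metric.ball (0 : ℂ) 1 := by
      simp only [Metric.mem_ball, dist_zero_right, norm_pow]
      exact pow_lt_one₀ (norm_nonneg _) hq (by norm_num)
    have hT := (Complex.hasSum_taylorSeries_on_ball SBaux.HH_diff hx).tsum_eq
    have hinj : Function.Injective (fun i : ℕ => 3 * i + 2) := fun a b h => by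
      simp only at h; omega
    rw [SBaux.SB_eq2 hζ hq, ← hT, ← tsum_mul_left]
    refine Eq.trans ?_ (hinj.tsum_eq ?_)
    · refine tsum_congr fun i => ?_
      have h1 : (3 * i + 2) % 3 = 2 := by omega
      have h2 : (3 * i + 2 - 2) / 3 = i := by omega
      simp only [h1, h2, if_true, sub_zero, smul_eq_mul]
      ring
    · intro N hN
      by_contra hc
      apply hN
      have : N % 3 ≠ 2 := fun h => hc ⟨N / 3, by simp only; omega⟩
      simp [this]
  · intro N hN
    have : N % 3 ≠ 2 := by omega
    simp [this]
end
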